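/- arXiv:1601.08073 — 2 statements merged into one kernel-verified Lean document; each statement's English description precedes it below -/
import Mathlib

section
/- The operator T defined on K by T(u,v)(t) = (∫₀¹ k₁(t,s) f₁(s,u(s),v(s)) ds, ∫₀¹ k₂(t,s) f₂(s,u(s),v(s)) ds) maps the cone K into K: for every (u,v) ∈ K, both components of T(u,v) are continuous on [0,1], min_{t∈[a₁,b₁]} (T(u,v))₁(t) ≥ c₁‖(T(u,v))₁‖_∞ and min_{t∈[a₂,b₂]} (T(u,v))₂(t) ≥ c₂‖(T(u,v))₂‖_∞. -/
/-!
For `t ∈ [aᵢ, bᵢ]` and any `t' ∈ [0, 1]`, the two bounds on the kernel combine to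
`cᵢ |kᵢ(t', s)| ≤ cᵢ Φᵢ(s) ≤ kᵢ(t, s)` for a.e. `s`. Multiplying by the nonnegative
`fᵢ(s, u(s), v(s))` and integrating preserves this comparison, and it remains to take the supremum
over `t'` and the infimum over `t`. The components of `T (u, v)` are continuous by dominated
convergence, since a continuous kernel is bounded on the compact square.
-/

open MeasureTheory Set

noncomputable def supNorm (w : ℝ → ℝ) : ℝ := ⨆ t : Set.Icc (0:ℝ) 1, |w t.1|

noncomputable def infOn (a b : ℝ) (w : ℝ → ℝ) : ℝ := ⨅ t : Set.Icc a b, w t.1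

/-- Membership in the cone `K ⊆ C[0,1] × C[0,1]`. -/
def inCone (a₁ b₁ c₁ a₂ b₂ c₂ : ℝ) (u v : ℝ → ℝ) : Prop :=
  ContinuousOn u (Set.Icc 0 1) ∧ ContinuousOn v (Set.Icc 0 1) ∧
    c₁ * supNorm u ≤ infOn a₁ b₁ u ∧ c₂ * supNorm v ≤ infOn a₂ b₂ v

/-- `(u, v)` solves the system of Hammerstein integral equations (*). -/
def isSolution (k₁ k₂ : ℝ → ℝ → ℝ) (f₁ f₂ : ℝ → ℝ → ℝ → ℝ) (u v : ℝ → ℝ) : Prop :=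
  (∀ t ∈ Set.Icc (0:ℝ) 1, u t = ∫ s in (0:ℝ)..1, k₁ t s * f₁ s (u s) (v s)) ∧
    (∀ t ∈ Set.Icc (0:ℝ) 1, v t = ∫ s in (0:ℝ)..1, k₂ t s * f₂ s (u s) (v s))

/-- `(u, v)` is a nontrivial solution of (*) lying in the cone. -/
def nontrivialSolution (k₁ k₂ : ℝ → ℝ → ℝ) (f₁ f₂ : ℝ → ℝ → ℝ → ℝ)
    (a₁ b₁ c₁ a₂ b₂ c₂ : ℝ) (u v : ℝ → ℝ) : Prop :=
  inCone a₁ b₁ c₁ a₂ b₂ c₂ u v ∧ isSolution k₁ k₂ f₁ f₂ u v ∧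
    0 < max (supNorm u) (supNorm v)

/-- Condition `(I¹_{ρ₁,ρ₂})`. -/
def condI1 (f₁ f₂ : ℝ → ℝ → ℝ → ℝ) (m₁ m₂ ρ₁ ρ₂ : ℝ) : Prop :=
  ∀ t ∈ Set.Icc (0:ℝ) 1, ∀ x ∈ Set.Icc (-ρ₁) ρ₁, ∀ y ∈ Set.Icc (-ρ₂) ρ₂,
    f₁ t x y < m₁ * ρ₁ ∧ f₂ t x y < m₂ * ρ₂

/-- Condition `(I⁰_{ρ₁,ρ₂})`. -/
def condI0 (f₁ f₂ : ℝ → ℝ → ℝ → ℝ) (a₁ b₁ c₁ a₂ b₂ c₂ M₁ M₂ ρ₁ ρ₂ : ℝ) : Prop :=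
  (∀ t ∈ Set.Icc a₁ b₁, ∀ x ∈ Set.Icc ρ₁ (ρ₁ / c₁), ∀ y ∈ Set.Icc (-(ρ₂ / c₂)) (ρ₂ / c₂),
      M₁ * ρ₁ < f₁ t x y) ∧
    (∀ t ∈ Set.Icc a₂ b₂, ∀ x ∈ Set.Icc (-(ρ₁ / c₁)) (ρ₁ / c₁), ∀ y ∈ Set.Icc ρ₂ (ρ₂ / c₂),
      M₂ * ρ₂ < f₂ t x y)

/-- Condition `(I⁰_{ρ₁,ρ₂})⋆`. -/
def condI0star (f₁ f₂ : ℝ → ℝ → ℝ → ℝ) (a₁ b₁ c₁ a₂ b₂ c₂ M₁ M₂ ρ₁ ρ₂ : ℝ) : Prop :=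
  (∀ t ∈ Set.Icc a₁ b₁, ∀ x ∈ Set.Icc 0 (ρ₁ / c₁), ∀ y ∈ Set.Icc (-(ρ₂ / c₂)) (ρ₂ / c₂),
      M₁ * ρ₁ < f₁ t x y) ∨
    (∀ t ∈ Set.Icc a₂ b₂, ∀ x ∈ Set.Icc (-(ρ₁ / c₁)) (ρ₁ / c₁), ∀ y ∈ Set.Icc 0 (ρ₂ / c₂),
      M₂ * ρ₂ < f₂ t x y)

section KernelIntegrals

variable {S : Type*} [MeasurableSpace S] {μ : Measure S}

lemma continuousOn_integral_mul {X R : Type*} [TopologicalSpace X] [FirstCountableTopology X]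
    [TopologicalSpace S] [OpensMeasurableSpace S] [NormedRing R] [NormedSpace ℝ R]
    [SecondCountableTopologyEither S R] {A : Set X} {B : Set S} {k : X → S → R} {h : S → R}
    (hA : IsCompact A) (hB : IsCompact B) (hBm : MeasurableSet B)
    (hk : ContinuousOn (fun p : X × S => k p.1 p.2) (A ×ˢ B)) (hh : IntegrableOn h B μ) :
    ContinuousOn (fun t => ∫ s in B, k t s * h s ∂μ) A := by
  obtain ⟨M, hM⟩ := (hA.prod hB).exists_bound_of_continuousOn hk
  refine continuousOn_of_dominated (bound := fun s => M * ‖h s‖) (fun t ht => ?_)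
    (fun t ht => ?_) (hh.norm.const_mul M) ?_
  · have hkt : ContinuousOn (k t) B := hk.uncurry_left t ht
    exact (hkt.aestronglyMeasurable hBm).mul hh.aestronglyMeasurable
  · filter_upwards [ae_restrict_mem hBm] with s hs
    exact norm_mul_le_of_le (hM (t, s) ⟨ht, hs⟩) le_rfl
  · filter_upwards [ae_restrict_mem hBm] with s hs
    exact (hk.uncurry_right s hs).mul continuousOn_const

lemma mul_abs_integral_mul_le_integral_mul {c : ℝ} {κ κ' h : S → ℝ} (hc : 0 ≤ c)
    (hκ : ∀ᵐ s ∂μ, c * |κ' s| ≤ κ s) (hh : 0 ≤ᵐ[μ] h)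
    (hint : Integrable (fun s => κ s * h s) μ) :
    c * |∫ s, κ' s * h s ∂μ| ≤ ∫ s, κ s * h s ∂μ := by
  have hbound : ∀ᵐ s ∂μ, ‖c * (κ' s * h s)‖ ≤ κ s * h s := by
    filter_upwards [hκ, hh] with s hκs hhs
    calc ‖c * (κ' s * h s)‖ = c * |κ' s| * h s := by
          rw [Real.norm_eq_abs, abs_mul, abs_mul, abs_of_nonneg hc, abs_of_nonneg hhs, mul_assoc]
      _ ≤ κ s * h s := mul_le_mul_of_nonneg_right hκs hhs
  calc c * |∫ s, κ' s * h s ∂μ| = ‖∫ s, c * (κ' s * h s) ∂μ‖ := by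
        rw [integral_const_mul, Real.norm_eq_abs, abs_mul, abs_of_nonneg hc]
    _ ≤ ∫ s, κ s * h s ∂μ := norm_integral_le_of_norm_le hint hbound

lemma ae_mul_abs_le_of_abs_le_of_mul_le {X : Type*} {A B : Set X} {k : X → S → ℝ} {Φ : S → ℝ}
    {c : ℝ} (hc : 0 ≤ c) (hub : ∀ t ∈ A, ∀ᵐ s ∂μ, |k t s| ≤ Φ s)
    (hlb : ∀ t ∈ B, ∀ᵐ s ∂μ, c * Φ s ≤ k t s) :
    ∀ t ∈ B, ∀ t' ∈ A, ∀ᵐ s ∂μ, c * |k t' s| ≤ k t s := by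
  intro t ht t' ht'
  filter_upwards [hub t' ht', hlb t ht] with s hubs hlbs
  exact (mul_le_mul_of_nonneg_left hubs hc).trans hlbs

end KernelIntegrals

lemma continuousOn_superposition {X Y Z W : Type*} [TopologicalSpace X] [TopologicalSpace Y]
    [TopologicalSpace Z] [TopologicalSpace W] {A : Set X} {f : X → Y → Z → W} {u : X → Y}
    {v : X → Z}
    (hf : ContinuousOn (fun p : X × Y × Z => f p.1 p.2.1 p.2.2) (A ×ˢ (univ : Set (Y × Z))))
    (hu : ContinuousOn u A) (hv : ContinuousOn v A) :
    ContinuousOn (fun s => f s (u s) (v s)) A :=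
  hf.comp (continuousOn_id.prodMk (hu.prodMk hv)) fun _ hs => ⟨hs, mem_univ _⟩

/-- The cone in `C[0,1]` of which two copies, with different parameters, have `K` as their product.
As in `inCone`, a function on `ℝ` stands for its restriction to `[0,1]`, so `[a,b] ⊆ [0,1]` is
intended. -/
def componentCone (a b c : ℝ) : Set (ℝ → ℝ) :=
  {w | ContinuousOn w (Icc 0 1) ∧ c * supNorm w ≤ infOn a b w}

lemma inCone_iff {a₁ b₁ c₁ a₂ b₂ c₂ : ℝ} {u v : ℝ → ℝ} :
    inCone a₁ b₁ c₁ a₂ b₂ c₂ u v ↔ u ∈ componentCone a₁ b₁ c₁ ∧ v ∈ componentCone a₂ b₂ c₂ :=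
  ⟨fun ⟨hu, hv, hu', hv'⟩ => ⟨⟨hu, hu'⟩, hv, hv'⟩, fun ⟨⟨hu, hu'⟩, hv, hv'⟩ => ⟨hu, hv, hu', hv'⟩⟩

lemma mul_supNorm_le_infOn {a b c : ℝ} {w : ℝ → ℝ} (hab : a ≤ b) (hc : 0 ≤ c)
    (hw : ∀ t ∈ Icc a b, ∀ t' ∈ Icc (0 : ℝ) 1, c * |w t'| ≤ w t) :
    c * supNorm w ≤ infOn a b w := by
  have : Nonempty (Icc a b) := (nonempty_Icc.2 hab).to_subtype
  rw [supNorm, Real.mul_iSup_of_nonneg hc]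
  exact le_ciInf fun t => ciSup_le fun t' => hw t t.2 t' t'.2

lemma integral_mul_mem_componentCone {k : ℝ → ℝ → ℝ} {h : ℝ → ℝ} {a b c : ℝ}
    (hk : ContinuousOn (fun p : ℝ × ℝ => k p.1 p.2) (Icc 0 1 ×ˢ Icc 0 1))
    (ha : 0 ≤ a) (hab : a ≤ b) (hb : b ≤ 1) (hc : 0 ≤ c)
    (hkc : ∀ t ∈ Icc a b, ∀ t' ∈ Icc (0 : ℝ) 1,
      ∀ᵐ s ∂(volume.restrict (Icc (0 : ℝ) 1)), c * |k t' s| ≤ k t s)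
    (hh : IntegrableOn h (Icc 0 1)) (hh₀ : ∀ s ∈ Icc (0 : ℝ) 1, 0 ≤ h s) :
    (fun t => ∫ s in (0 : ℝ)..1, k t s * h s) ∈ componentCone a b c := by
  simp only [intervalIntegral.integral_of_le zero_le_one, ← integral_Icc_eq_integral_Ioc]
  refine ⟨continuousOn_integral_mul isCompact_Icc isCompact_Icc measurableSet_Icc hk hh,
    mul_supNorm_le_infOn hab hc fun t ht t' ht' => ?_⟩
  have hkt : ContinuousOn (k t) (Icc 0 1) := hk.uncurry_left t (Icc_subset_Icc ha hb ht)
  exact mul_abs_integral_mul_le_integral_mul hc (hkc t ht t' ht')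
    ((ae_restrict_mem measurableSet_Icc).mono hh₀) (hh.continuousOn_mul hkt isCompact_Icc)

theorem cone_invariance_general
    {k₁ k₂ : ℝ → ℝ → ℝ} {f₁ f₂ : ℝ → ℝ → ℝ → ℝ} {a₁ b₁ c₁ a₂ b₂ c₂ : ℝ} {u v : ℝ → ℝ}
    (hk₁ : ContinuousOn (fun p : ℝ × ℝ => k₁ p.1 p.2) (Icc 0 1 ×ˢ Icc 0 1))
    (hk₂ : ContinuousOn (fun p : ℝ × ℝ => k₂ p.1 p.2) (Icc 0 1 ×ˢ Icc 0 1))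
    (ha₁ : 0 ≤ a₁) (hab₁ : a₁ ≤ b₁) (hb₁ : b₁ ≤ 1) (ha₂ : 0 ≤ a₂) (hab₂ : a₂ ≤ b₂) (hb₂ : b₂ ≤ 1)
    (hc₁ : 0 ≤ c₁) (hc₂ : 0 ≤ c₂)
    (hkc₁ : ∀ t ∈ Icc a₁ b₁, ∀ t' ∈ Icc (0 : ℝ) 1,
      ∀ᵐ s ∂(volume.restrict (Icc (0 : ℝ) 1)), c₁ * |k₁ t' s| ≤ k₁ t s)
    (hkc₂ : ∀ t ∈ Icc a₂ b₂, ∀ t' ∈ Icc (0 : ℝ) 1,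
      ∀ᵐ s ∂(volume.restrict (Icc (0 : ℝ) 1)), c₂ * |k₂ t' s| ≤ k₂ t s)
    (hf₁ : ContinuousOn (fun p : ℝ × ℝ × ℝ => f₁ p.1 p.2.1 p.2.2)
      (Icc 0 1 ×ˢ (univ : Set (ℝ × ℝ))))
    (hf₂ : ContinuousOn (fun p : ℝ × ℝ × ℝ => f₂ p.1 p.2.1 p.2.2)
      (Icc 0 1 ×ˢ (univ : Set (ℝ × ℝ))))
    (hf₁nn : ∀ t ∈ Icc (0 : ℝ) 1, ∀ x y : ℝ, 0 ≤ f₁ t x y)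
    (hf₂nn : ∀ t ∈ Icc (0 : ℝ) 1, ∀ x y : ℝ, 0 ≤ f₂ t x y)
    (hu : ContinuousOn u (Icc 0 1)) (hv : ContinuousOn v (Icc 0 1)) :
    inCone a₁ b₁ c₁ a₂ b₂ c₂
      (fun t => ∫ s in (0 : ℝ)..1, k₁ t s * f₁ s (u s) (v s))
      (fun t => ∫ s in (0 : ℝ)..1, k₂ t s * f₂ s (u s) (v s)) := by
  have hF₁ := (continuousOn_superposition hf₁ hu hv).integrableOn_Icc (μ := volume)
  have hF₂ := (continuousOn_superposition hf₂ hu hv).integrableOn_Icc (μ := volume)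
  exact inCone_iff.2
    ⟨integral_mul_mem_componentCone hk₁ ha₁ hab₁ hb₁ hc₁ hkc₁ hF₁ fun s hs => hf₁nn s hs _ _,
      integral_mul_mem_componentCone hk₂ ha₂ hab₂ hb₂ hc₂ hkc₂ hF₂ fun s hs => hf₂nn s hs _ _⟩

theorem cone_invariance
    (k₁ k₂ : ℝ → ℝ → ℝ) (f₁ f₂ : ℝ → ℝ → ℝ → ℝ) (Φ₁ Φ₂ : ℝ → ℝ)
    (a₁ b₁ c₁ a₂ b₂ c₂ : ℝ)
    (hk₁ : ContinuousOn (fun p : ℝ × ℝ => k₁ p.1 p.2) (Set.Icc 0 1 ×ˢ Set.Icc 0 1))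
    (hk₂ : ContinuousOn (fun p : ℝ × ℝ => k₂ p.1 p.2) (Set.Icc 0 1 ×ˢ Set.Icc 0 1))
    (ha₁ : 0 ≤ a₁) (hab₁ : a₁ ≤ b₁) (hb₁ : b₁ ≤ 1)
    (ha₂ : 0 ≤ a₂) (hab₂ : a₂ ≤ b₂) (hb₂ : b₂ ≤ 1)
    (hc₁ : c₁ ∈ Set.Ioc (0:ℝ) 1) (hc₂ : c₂ ∈ Set.Ioc (0:ℝ) 1)
    (hΦ₁meas : Measurable Φ₁) (hΦ₂meas : Measurable Φ₂)
    (hΦ₁nn : ∀ s ∈ Set.Icc (0:ℝ) 1, 0 ≤ Φ₁ s) (hΦ₂nn : ∀ s ∈ Set.Icc (0:ℝ) 1, 0 ≤ Φ₂ s)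
    (hΦ₁bdd : ∃ C : ℝ, ∀ᵐ s ∂(volume.restrict (Set.Icc (0:ℝ) 1)), |Φ₁ s| ≤ C)
    (hΦ₂bdd : ∃ C : ℝ, ∀ᵐ s ∂(volume.restrict (Set.Icc (0:ℝ) 1)), |Φ₂ s| ≤ C)
    (hΦ₁pos : 0 < ∫ s in a₁..b₁, Φ₁ s) (hΦ₂pos : 0 < ∫ s in a₂..b₂, Φ₂ s)
    (hub₁ : ∀ t ∈ Set.Icc (0:ℝ) 1, ∀ᵐ s ∂(volume.restrict (Set.Icc (0:ℝ) 1)), |k₁ t s| ≤ Φ₁ s)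
    (hub₂ : ∀ t ∈ Set.Icc (0:ℝ) 1, ∀ᵐ s ∂(volume.restrict (Set.Icc (0:ℝ) 1)), |k₂ t s| ≤ Φ₂ s)
    (hlb₁ : ∀ t ∈ Set.Icc a₁ b₁, ∀ᵐ s ∂(volume.restrict (Set.Icc (0:ℝ) 1)), c₁ * Φ₁ s ≤ k₁ t s)
    (hlb₂ : ∀ t ∈ Set.Icc a₂ b₂, ∀ᵐ s ∂(volume.restrict (Set.Icc (0:ℝ) 1)), c₂ * Φ₂ s ≤ k₂ t s)
    (hf₁ : ContinuousOn (fun p : ℝ × ℝ × ℝ => f₁ p.1 p.2.1 p.2.2)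
      (Set.Icc 0 1 ×ˢ (Set.univ : Set (ℝ × ℝ))))
    (hf₂ : ContinuousOn (fun p : ℝ × ℝ × ℝ => f₂ p.1 p.2.1 p.2.2)
      (Set.Icc 0 1 ×ˢ (Set.univ : Set (ℝ × ℝ))))
    (hf₁nn : ∀ t ∈ Set.Icc (0:ℝ) 1, ∀ x y : ℝ, 0 ≤ f₁ t x y)
    (hf₂nn : ∀ t ∈ Set.Icc (0:ℝ) 1, ∀ x y : ℝ, 0 ≤ f₂ t x y)
    :
    ∀ u v : ℝ → ℝ, inCone a₁ b₁ c₁ a₂ b₂ c₂ u v →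
      inCone a₁ b₁ c₁ a₂ b₂ c₂
        (fun t => ∫ s in (0:ℝ)..1, k₁ t s * f₁ s (u s) (v s))
        (fun t => ∫ s in (0:ℝ)..1, k₂ t s * f₂ s (u s) (v s)) := by
  intro u v huv
  exact cone_invariance_general hk₁ hk₂ ha₁ hab₁ hb₁ ha₂ hab₂ hb₂ hc₁.1.le hc₂.1.le
    (ae_mul_abs_le_of_abs_le_of_mul_le hc₁.1.le hub₁ hlb₁)
    (ae_mul_abs_le_of_abs_le_of_mul_le hc₂.1.le hub₂ hlb₂) hf₁ hf₂ hf₁nn hf₂nn huv.1 huv.2.1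
end

section
/- (Existence, case (S₁)) Suppose there exist ρ₁,ρ₂,r₁,r₂ ∈ (0,∞) with ρ₁/c₁ < r₁ and ρ₂/c₂ < r₂ such that condition (I⁰_{ρ₁,ρ₂}) holds and condition (I¹_{r₁,r₂}) holds. Then the system (*) has at least one nontrivial solution in K. -/
open MeasureTheory Set

/-!
A solution of the system is a fixed point of the operator `Ψ` obtained by composing compact linear
integral operators with the superposition operators of the nonlinearities. Truncating the
nonlinearities outside the box `[-r, r]` makes the range of `Ψ` relatively compact, and the upper
bound on them there returns every fixed point of the truncated operator to the box, so that it
solves the original system.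

Schauder's theorem alone might produce the zero solution. It is therefore applied to
`u ↦ Ψ (u + τ(u) ρ)`, where `τ(u) ≥ 0` is the least number such that `u + τ(u) ρ` has a component
lying above its level `ρ i` on all of `A i`. If `u` is a fixed point with `τ(u) > 0`, then every
component of `v = u + τ(u) ρ` takes a value at most `ρ j` on `A j`, so the cone inequality gives
`‖v j‖ ≤ ρ j / c j`. The lower bound on the nonlinearities then forces `u i = Ψ v i ≥ ρ i` on `A i`
for the component `i` that was raised to its level, so no raising was needed. Hence `τ(u) = 0`, and
`u` is a fixed point of `Ψ` that reaches its level.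

Brouwer's theorem is obtained by the Milnor–Rogers argument: if `g` is Lipschitz and vanishes
outside `s`, then `id + t g` maps `s` onto itself for small `t`, so the polynomial
`t ↦ ∫ x in s, det (id + t g' x)` is constant, equal to the volume of `s`; a smooth retraction
`id + g` of a ball onto its sphere would make it vanish at `t = 1`.
-/

open Filter Metric Topology
open scoped NNReal Polynomial unitInterval

section FixedPoint

variable {α : Type*} [MetricSpace α]

theorem exists_fixedPoint_of_forall_exists_dist_lt {S : α → α} (hS : Continuous S) {Q : Set α}
    (hQ : IsCompact Q) (hmem : ∀ x, S x ∈ Q) (happrox : ∀ ε > 0, ∃ x, dist (S x) x < ε) :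
    ∃ x, S x = x := by
  choose x hx using fun n : ℕ => happrox (1 / (n + 1)) Nat.one_div_pos_of_nat
  obtain ⟨q, -, φ, hφ, hlim⟩ := hQ.tendsto_subseq fun n => hmem (x n)
  have hdist : Tendsto (fun n => dist ((S ∘ x ∘ φ) n) ((x ∘ φ) n)) atTop (𝓝 0) :=
    squeeze_zero (fun _ => dist_nonneg) (fun n => (hx (φ n)).le)
      (tendsto_one_div_add_atTop_nhds_zero_nat.comp hφ.tendsto_atTop)
  have hlim' : Tendsto (x ∘ φ) atTop (𝓝 q) := (tendsto_iff_of_dist hdist).1 hlim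
  exact ⟨q, tendsto_nhds_unique ((hS.tendsto q).comp hlim') hlim⟩

end FixedPoint

section VolumePolynomial

theorem exists_polynomial_eval_eq_integral {α : Type*} [MeasurableSpace α] {μ : Measure α}
    {p : α → ℝ[X]} {d : ℕ} (hdeg : ∀ x, (p x).natDegree ≤ d)
    (hint : ∀ t, Integrable (fun x => (p x).eval t) μ) :
    ∃ P : ℝ[X], ∀ t, P.eval t = ∫ x, (p x).eval t ∂μ := by
  let nodes := Finset.range (d + 1)
  let basis (i : ℕ) : ℝ[X] := Lagrange.basis nodes (Nat.cast : ℕ → ℝ) i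
  have hinterp (x : α) (t : ℝ) :
      (p x).eval t = ∑ i ∈ nodes, (p x).eval (i : ℝ) * (basis i).eval t := by
    have hlt : (p x).degree < (nodes.card : WithBot ℕ) :=
      Polynomial.degree_le_natDegree.trans_lt <| by
        rw [Finset.card_range]
        exact_mod_cast Nat.lt_succ_of_le (hdeg x)
    conv_lhs => rw [Lagrange.eq_interpolate Nat.cast_injective.injOn hlt]
    simp only [Lagrange.interpolate_apply, Polynomial.eval_finsetSum, Polynomial.eval_mul,
      Polynomial.eval_C, basis]
  refine ⟨∑ i ∈ nodes, Polynomial.C (∫ x, (p x).eval (i : ℝ) ∂μ) * basis i, fun t => ?_⟩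
  simp_rw [hinterp _ t, Polynomial.eval_finsetSum, Polynomial.eval_mul, Polynomial.eval_C,
    integral_finsetSum nodes fun i _ => (hint i).mul_const _, integral_mul_const]

theorem bijective_id_add_of_lipschitzWith {F : Type*} [NormedAddCommGroup F] [CompleteSpace F]
    {g : F → F} {K : ℝ≥0} (hg : LipschitzWith K g) (hK : K < 1) :
    Function.Bijective fun x => x + g x := by
  constructor
  · have hanti := AntilipschitzWith.id.add_lipschitzWith hg (by simpa using hK)
    exact hanti.injective
  · intro y
    have hcontr : ContractingWith K fun x => y - g x :=
      ⟨hK, by simpa using (LipschitzWith.const y).sub hg⟩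
    exact ⟨_, (sub_eq_iff_eq_add.1 hcontr.fixedPoint_isFixedPt).symm⟩

variable {E : Type*} [NormedAddCommGroup E] [NormedSpace ℝ E]

theorem eventually_nhds_zero_det_id_add_pos :
    ∀ᶠ B in 𝓝 (0 : E →L[ℝ] E), 0 < (ContinuousLinearMap.id ℝ E + B).det := by
  have hcont : Continuous fun B : E →L[ℝ] E => (ContinuousLinearMap.id ℝ E + B).det :=
    ContinuousLinearMap.continuous_det.comp (continuous_const.add continuous_id)
  exact hcont.continuousAt.eventually_const_lt (by simp [ContinuousLinearMap.det])

variable [FiniteDimensional ℝ E]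

theorem exists_polynomial_eval_eq_det_id_add_smul (A : E →L[ℝ] E) :
    ∃ p : ℝ[X], p.natDegree ≤ Module.finrank ℝ E ∧
      ∀ t : ℝ, p.eval t = (ContinuousLinearMap.id ℝ E + t • A).det := by
  let M := LinearMap.toMatrix (Module.finBasis ℝ E) (Module.finBasis ℝ E) A.toLinearMap
  refine ⟨(-M).charpolyRev, ?_, fun t => ?_⟩
  · rw [← Matrix.reverse_charpoly]
    exact (Polynomial.reverse_natDegree_le _).trans
      ((Matrix.charpoly_natDegree_eq_dim _).trans (Fintype.card_fin _)).le
  · have hdet : (ContinuousLinearMap.id ℝ E + t • A).det = (1 + t • M).det := by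
      rw [ContinuousLinearMap.det, ← LinearMap.det_toMatrix (Module.finBasis ℝ E)]
      simp [M]
    rw [hdet, Matrix.charpolyRev, ← Polynomial.coe_evalRingHom, RingHom.map_det]
    congr 1
    ext i j
    simp [Matrix.one_apply, apply_ite, mul_comm t]

variable [MeasurableSpace E] [BorelSpace E] (μ : Measure E) {g : E → E} {K : ℝ≥0} {s : Set E}

theorem integrableOn_det_id_add_smul_fderiv (hg : LipschitzWith K g) (hs : μ s ≠ ⊤) (t : ℝ) :
    IntegrableOn (fun x => (ContinuousLinearMap.id ℝ E + t • fderiv ℝ g x).det) s μ := by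
  have hcont : Continuous fun B : E →L[ℝ] E => (ContinuousLinearMap.id ℝ E + t • B).det :=
    ContinuousLinearMap.continuous_det.comp (by fun_prop)
  obtain ⟨C, hC⟩ := (isCompact_closedBall (0 : E →L[ℝ] E) K).exists_bound_of_continuousOn
    hcont.continuousOn
  refine Measure.integrableOn_of_bounded hs
    (hcont.measurable.comp (measurable_fderiv ℝ g)).aestronglyMeasurable
    (ae_of_all _ fun x => hC _ ?_)
  simpa using norm_fderiv_le_of_lipschitz ℝ hg

variable [μ.IsAddHaarMeasure]

theorem setIntegral_det_id_add_fderiv_of_pos (hg : LipschitzWith K g) (hK : K < 1)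
    (hs : MeasurableSet s) (hzero : ∀ x ∉ s, g x = 0) (hdiff : ∀ x ∈ s, DifferentiableAt ℝ g x)
    (hpos : ∀ x, 0 < (ContinuousLinearMap.id ℝ E + fderiv ℝ g x).det) :
    ∫ x in s, (ContinuousLinearMap.id ℝ E + fderiv ℝ g x).det ∂μ = μ.real s := by
  have hbij := bijective_id_add_of_lipschitzWith hg hK
  have himage : (fun x => x + g x) '' s = s := by
    rw [← compl_inj_iff, ← image_compl_eq hbij]
    exact (image_congr fun x hx => by simp [hzero x hx]).trans (image_id' _)
  have hchange := integral_image_eq_integral_abs_det_fderiv_smul μ hs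
    (fun x hx => ((hasFDerivAt_id x).add (hdiff x hx).hasFDerivAt).hasFDerivWithinAt)
    hbij.1.injOn (fun _ => (1 : ℝ))
  simpa [himage, abs_of_pos (hpos _)] using hchange.symm

theorem setIntegral_det_id_add_fderiv (hg : LipschitzWith K g) (hs : MeasurableSet s)
    (hfin : μ s ≠ ⊤) (hzero : ∀ x ∉ s, g x = 0) (hdiff : ∀ x ∈ s, DifferentiableAt ℝ g x) :
    ∫ x in s, (ContinuousLinearMap.id ℝ E + fderiv ℝ g x).det ∂μ = μ.real s := by
  choose p hdeg hp using fun x => exists_polynomial_eval_eq_det_id_add_smul (fderiv ℝ g x)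
  obtain ⟨P, hP⟩ := exists_polynomial_eval_eq_integral (μ := μ.restrict s) hdeg fun t => by
    simpa only [hp, IntegrableOn] using integrableOn_det_id_add_smul_fderiv μ hg hfin t
  simp only [hp] at hP
  have hsmall : ∀ᶠ t in 𝓝 (0 : ℝ), P.eval t = μ.real s := by
    have hlim : Tendsto (fun t : ℝ => ‖t‖₊ * K) (𝓝 0) (𝓝 0) := by
      simpa using (by fun_prop : Continuous fun t : ℝ => ‖t‖₊ * K).tendsto 0
    obtain ⟨δ, hδ, hdet⟩ := Metric.eventually_nhds_iff.1
      (eventually_nhds_zero_det_id_add_pos (E := E))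
    filter_upwards [hlim.eventually_lt_const one_pos,
      hlim.eventually_lt_const (Real.toNNReal_pos.2 hδ)] with t ht1 htδ
    have hLip : LipschitzWith (‖t‖₊ * K) (t • g) := (lipschitzWith_smul t).comp hg
    have hpos (x : E) : 0 < (ContinuousLinearMap.id ℝ E + fderiv ℝ (t • g) x).det :=
      hdet <| (dist_zero_right _).trans_lt <| (norm_fderiv_le_of_lipschitz ℝ hLip).trans_lt <|
        (Real.lt_toNNReal_iff_coe_lt).1 htδ
    rw [hP, ← setIntegral_det_id_add_fderiv_of_pos μ hLip ht1 hs
      (fun x hx => by simp [hzero x hx]) (fun x hx => (hdiff x hx).const_smul t) hpos]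
    refine setIntegral_congr_fun hs fun x hx => ?_
    simp only [fderiv_const_smul (hdiff x hx)]
  have hconst : P = Polynomial.C (μ.real s) := by
    refine Polynomial.eq_of_infinite_eval_eq _ _ ?_
    simpa using infinite_of_mem_nhds 0 hsmall
  simpa [hconst] using (hP 1).symm

end VolumePolynomial

section Brouwer

theorem lipschitzWith_indicator {E F : Type*} [NormedAddCommGroup E] [NormedSpace ℝ E]
    [NormedAddCommGroup F] {g : E → F} {K : ℝ≥0} {s : Set E} (hg : LipschitzOnWith K g s)
    (hs : IsClosed s) (hzero : ∀ x ∈ frontier s, g x = 0) : LipschitzWith K (s.indicator g) := by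
  have hcross {x y : E} (hx : x ∈ s) (hy : y ∉ s) : dist (g x) 0 ≤ K * dist x y := by
    obtain ⟨z, hz, hzs⟩ : (segment ℝ x y ∩ frontier s).Nonempty := by
      by_contra hempty
      have hsub : segment ℝ x y ⊆ interior s ∪ sᶜ := fun z hz => by
        by_contra h
        simp only [mem_union, mem_compl_iff, not_or, not_not] at h
        exact hempty ⟨z, hz, subset_closure h.2, h.1⟩
      have hdisj : Disjoint (interior s) sᶜ := disjoint_compl_right.mono_left interior_subset
      rcases (convex_segment x y).isPreconnected.subset_or_subset isOpen_interior hs.isOpen_compl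
        hdisj hsub with h | h
      · exact hy (interior_subset (h (right_mem_segment ℝ x y)))
      · exact h (left_mem_segment ℝ x y) hx
    calc dist (g x) 0 = dist (g x) (g z) := by rw [hzero z hzs]
      _ ≤ K * dist x z := hg.dist_le_mul x hx z (hs.frontier_subset hzs)
      _ ≤ K * dist x y := by
        gcongr
        rw [← dist_add_dist_of_mem_segment hz]
        exact le_add_of_nonneg_right dist_nonneg
  refine LipschitzWith.of_dist_le_mul fun x y => ?_
  by_cases hx : x ∈ s <;> by_cases hy : y ∈ s
  · simpa [hx, hy] using hg.dist_le_mul x hx y hy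
  · simpa [hx, hy] using hcross hx hy
  · simpa [hx, hy, dist_comm] using hcross hy hx
  · simp only [hx, hy, not_false_eq_true, indicator_of_notMem, dist_self]
    positivity

variable {E : Type*} [NormedAddCommGroup E] [InnerProductSpace ℝ E]
  [FiniteDimensional ℝ E]

theorem det_eq_zero_of_norm_eventuallyEq_const {r : E → E} {r' : E →L[ℝ] E} {x : E} {ρ : ℝ}
    (hr : HasFDerivAt r r' x) (hρ : ρ ≠ 0) (hnorm : ∀ᶠ y in 𝓝 x, ‖r y‖ = ρ) : r'.det = 0 := by
  have hsq : HasFDerivAt (fun y => ‖r y‖ ^ 2) (0 : E →L[ℝ] ℝ) x :=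
    (hasFDerivAt_const (ρ ^ 2) x).congr_of_eventuallyEq (hnorm.mono fun y hy => congrArg (· ^ 2) hy)
  have horth (w : E) : inner ℝ (r x) (r' w) = 0 := by
    have := DFunLike.congr_fun (hr.norm_sq.unique hsq) w
    simpa using this
  by_contra hdet
  obtain ⟨w, hw⟩ := (LinearMap.equivOfDetNeZero r'.toLinearMap hdet).surjective (r x)
  have hzero : ‖r x‖ = 0 := by simpa [show r' w = r x from hw] using horth w
  exact hρ (hnorm.self_of_nhds.symm.trans hzero)

theorem not_exists_contDiff_retraction_sphere {ρ : ℝ} (hρ : 0 < ρ) :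
    ¬ ∃ r : E → E, ContDiff ℝ 1 r ∧ (∀ x, ‖r x‖ = ρ) ∧ ∀ x ∈ sphere (0 : E) ρ, r x = x := by
  rintro ⟨r, hr, hnorm, hfix⟩
  borelize E
  let g : E → E := (closedBall 0 ρ).indicator (r - id)
  obtain ⟨K, hK⟩ := (hr.sub contDiff_id).contDiffOn.exists_lipschitzOnWith one_ne_zero
    (convex_closedBall (0 : E) ρ) (isCompact_closedBall 0 ρ)
  have hg : LipschitzWith K g := lipschitzWith_indicator hK isClosed_closedBall fun x hx => by
    rw [Pi.sub_apply, hfix x (frontier_closedBall_subset_sphere hx), id_eq, sub_self]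
  have hderiv {x : E} (hx : x ∈ ball 0 ρ) :
      HasFDerivAt g (fderiv ℝ r x - ContinuousLinearMap.id ℝ E) x :=
    ((hr.differentiable one_ne_zero x).hasFDerivAt.sub (hasFDerivAt_id x)).congr_of_eventuallyEq <|
      (isOpen_ball.eventually_mem hx).mono fun y hy =>
        indicator_of_mem (ball_subset_closedBall hy) _
  have hzero {x : E} (hx : x ∉ ball 0 ρ) : g x = 0 := by
    refine indicator_apply_eq_zero.2 fun hx' => ?_
    have hsphere : x ∈ sphere 0 ρ := le_antisymm hx' (not_lt.1 hx)
    rw [Pi.sub_apply, hfix x hsphere, id_eq, sub_self]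
  have hvolume := setIntegral_det_id_add_fderiv volume hg measurableSet_ball measure_ball_lt_top.ne
    (fun x => hzero) fun x hx => (hderiv hx).differentiableAt
  have hdet : ∀ x ∈ ball (0 : E) ρ, (ContinuousLinearMap.id ℝ E + fderiv ℝ g x).det = 0 :=
    fun x hx => by
      rw [(hderiv hx).fderiv, add_sub_cancel]
      exact det_eq_zero_of_norm_eventuallyEq_const
        (hr.differentiable one_ne_zero x).hasFDerivAt hρ.ne' (.of_forall hnorm)
  rw [setIntegral_eq_zero_of_forall_eq_zero hdet] at hvolume
  exact (ENNReal.toReal_pos (measure_ball_pos volume (0 : E) hρ).ne' measure_ball_lt_top.ne).ne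
    hvolume

theorem exists_fixedPoint_of_contDiff_of_norm_le {h : E → E} (hh : ContDiff ℝ 1 h) {R : ℝ}
    (hR : ∀ x, ‖h x‖ ≤ R) : ∃ x, h x = x := by
  have hR0 : 0 ≤ R := (norm_nonneg _).trans (hR 0)
  by_contra! hne
  -- The bump makes `G` the identity outside a ball, so normalizing `G` would be a retraction.
  let b : ContDiffBump (0 : E) := ⟨R + 1, R + 2, by positivity, by linarith⟩
  let G : E → E := fun x => x - b x • h x
  have hout {x : E} (hx : R + 2 ≤ ‖x‖) : G x = x := by
    simp [G, b.zero_of_le_dist (by simpa using hx)]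
  have hG0 (x : E) : G x ≠ 0 := fun hx => by
    have hxh : x = b x • h x := sub_eq_zero.1 hx
    have hball : ‖x‖ ≤ R := by
      rw [hxh, norm_smul, Real.norm_of_nonneg b.nonneg]
      exact (mul_le_of_le_one_left (norm_nonneg _) b.le_one).trans (hR x)
    rw [b.one_of_mem_closedBall (by simpa [b] using hball.trans (by linarith)), one_smul] at hxh
    exact hne x hxh.symm
  have hG : ContDiff ℝ 1 G := contDiff_id.sub (b.contDiff.smul hh)
  refine not_exists_contDiff_retraction_sphere (E := E) (ρ := R + 2) (by positivity)
    ⟨fun x => ((R + 2) * ‖G x‖⁻¹) • G x, ?_, fun x => ?_, fun x hx => ?_⟩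
  · exact (contDiff_const.mul ((hG.norm ℝ hG0).inv fun x => norm_ne_zero_iff.2 (hG0 x))).smul hG
  · rw [norm_smul, norm_mul, norm_inv, norm_norm,
      inv_mul_cancel_right₀ (norm_ne_zero_iff.2 (hG0 x)), Real.norm_of_nonneg (by positivity)]
  · have hx : ‖x‖ = R + 2 := by simpa using hx
    simp only [hout hx.ge, hx, mul_inv_cancel₀ (by positivity : R + 2 ≠ 0), one_smul]

theorem exists_fixedPoint_of_continuous_of_norm_le {h : E → E} (hh : Continuous h) {R : ℝ}
    (hR : ∀ x, ‖h x‖ ≤ R) : ∃ x, h x = x := by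
  refine exists_fixedPoint_of_forall_exists_dist_lt hh (isCompact_closedBall (0 : E) R)
    (fun x => by simpa using hR x) fun ε hε => ?_
  obtain ⟨g, hg, hgh, -⟩ := hh.exists_contDiff_approx 1 continuous_const fun _ => hε
  obtain ⟨x, hx⟩ := exists_fixedPoint_of_contDiff_of_norm_le hg (R := R + ε) fun x =>
    (norm_le_norm_add_norm_sub' _ (h x)).trans
      (add_le_add (hR x) ((dist_eq_norm _ _).symm.trans_le (hgh x).le))
  exact ⟨x, by simpa only [hx, dist_comm] using hgh x⟩

end Brouwer

section Schauder

theorem exists_fixedPoint_of_continuous_of_isBounded_range {V : Type*} [NormedAddCommGroup V]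
    [NormedSpace ℝ V] [FiniteDimensional ℝ V] {h : V → V} (hh : Continuous h)
    (hbdd : Bornology.IsBounded (range h)) : ∃ x, h x = x := by
  let e := toEuclidean (E := V)
  obtain ⟨R, hR⟩ := (e.lipschitz.isBounded_image hbdd).exists_norm_le
  obtain ⟨x, hx⟩ := exists_fixedPoint_of_continuous_of_norm_le (h := e ∘ h ∘ e.symm) (by fun_prop)
    fun x => hR _ (mem_image_of_mem e (mem_range_self _))
  exact ⟨e.symm x, by simpa using congrArg e.symm hx⟩

variable {X : Type*} [NormedAddCommGroup X] [NormedSpace ℝ X]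

theorem exists_continuousMap_finiteDimensional_dist_lt {Q : Set X} (hQ : IsCompact Q) {ε : ℝ}
    (hε : 0 < ε) : ∃ V : Submodule ℝ X, FiniteDimensional ℝ V ∧
      ∃ g : C(Q, V), ∀ y : Q, dist (g y : X) y < ε := by
  obtain ⟨N, -, hN, hcover⟩ := hQ.finite_cover_balls hε
  have : FiniteDimensional ℝ (Submodule.span ℝ N) := .span_of_finite ℝ hN
  have : CompactSpace Q := isCompact_iff_compactSpace.1 hQ
  refine ⟨Submodule.span ℝ N, inferInstance, ?_⟩
  refine exists_continuous_forall_mem_convex_of_local_const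
    (t := fun y : Q => {v : Submodule.span ℝ N | dist (v : X) y < ε}) (fun y => ?_) fun y => ?_
  · exact (convex_ball (y : X) ε).linear_preimage (Submodule.span ℝ N).subtype
  · obtain ⟨v, hv, hyv⟩ := mem_iUnion₂.1 (hcover y.2)
    refine ⟨⟨v, Submodule.subset_span hv⟩, ?_⟩
    exact (isOpen_ball.preimage continuous_subtype_val).eventually_mem hyv |>.mono fun z hz => by
      simpa [dist_comm] using hz

theorem exists_fixedPoint_of_continuous_of_isCompact {S : X → X} (hS : Continuous S) {Q : Set X}
    (hQ : IsCompact Q) (hmem : ∀ x, S x ∈ Q) : ∃ x, S x = x := by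
  refine exists_fixedPoint_of_forall_exists_dist_lt hS hQ hmem fun ε hε => ?_
  obtain ⟨V, _, g, hg⟩ := exists_continuousMap_finiteDimensional_dist_lt hQ hε
  have : CompactSpace Q := isCompact_iff_compactSpace.1 hQ
  obtain ⟨v, hv⟩ := exists_fixedPoint_of_continuous_of_isBounded_range
    (h := fun v : V => g ⟨S v, hmem v⟩) (by fun_prop)
    ((isCompact_range g.continuous).isBounded.subset (range_comp_subset_range _ g))
  refine ⟨v, ?_⟩
  have := hg ⟨S v, hmem v⟩
  rw [hv] at this
  rwa [dist_comm]

end Schauder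

section IntegralOperator

variable {X Y : Type*} [TopologicalSpace X] [TopologicalSpace Y] [CompactSpace Y]

theorem isCompact_setOf_norm_le_dist_le {M : Type*} [PseudoMetricSpace M] (κ : C(X, M)) (C : ℝ) :
    IsCompact {f : C(X, ℝ) | (∀ x, ‖f x‖ ≤ C) ∧
      ∀ x x', dist (f x) (f x') ≤ C * dist (κ x) (κ x')} := by
  refine ArzelaAscoli.isCompact_of_equicontinuous _ ?_ fun x₀ =>
    Metric.equicontinuousAt_of_continuity_modulus (fun x => C * dist (κ x₀) (κ x)) ?_ _
      (.of_forall fun x f => f.2.2 x₀ x)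
  · let P : Set (X → ℝ) := {f | (∀ x, f x ∈ closedBall 0 C) ∧
      ∀ x x', dist (f x) (f x') ≤ C * dist (κ x) (κ x')}
    have hP : IsCompact P := by
      refine (isCompact_univ_pi fun _ : X => isCompact_closedBall (0 : ℝ) C).of_isClosed_subset
        (.and ?_ ?_) fun f hf x _ => hf.1 x
      · simp only [Set.ofPred_forall]
        exact isClosed_iInter fun x => isClosed_closedBall.preimage (continuous_apply x)
      · simp only [Set.ofPred_forall]
        exact isClosed_iInter fun x => isClosed_iInter fun x' =>
          isClosed_le (by fun_prop) continuous_const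
    have himage : ContinuousMap.toFun '' {f : C(X, ℝ) | (∀ x, ‖f x‖ ≤ C) ∧
        ∀ x x', dist (f x) (f x') ≤ C * dist (κ x) (κ x')} = P := by
      ext f
      constructor
      · rintro ⟨f, hf, rfl⟩
        simpa [P] using hf
      · intro hf
        have hcont : Continuous f := continuous_iff_continuousAt.2 fun x₀ =>
          tendsto_iff_dist_tendsto_zero.2 <| squeeze_zero (fun _ => dist_nonneg)
            (fun x => hf.2 x x₀) <| by
              have : Continuous fun x => C * dist (κ x) (κ x₀) := by fun_prop
              simpa using this.tendsto x₀
        exact ⟨⟨f, hcont⟩, by simpa [P] using hf, rfl⟩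
    rwa [← himage] at hP
  · have : Continuous fun x => C * dist (κ x₀) (κ x) := by fun_prop
    simpa using this.tendsto x₀

variable [MeasurableSpace Y] [OpensMeasurableSpace Y] (μ : Measure Y) [IsFiniteMeasure μ]

theorem integrable_continuousMap (h : C(Y, ℝ)) : Integrable h μ :=
  h.continuous.integrable_of_hasCompactSupport (.of_compactSpace _)

theorem dist_integral_continuousMap_le (h h' : C(Y, ℝ)) :
    dist (∫ y, h y ∂μ) (∫ y, h' y ∂μ) ≤ μ.real univ * dist h h' := by
  rw [dist_eq_norm, ← integral_sub (integrable_continuousMap μ h) (integrable_continuousMap μ h'),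
    mul_comm]
  exact norm_integral_le_of_norm_le_const <| .of_forall fun y =>
    (dist_eq_norm _ _).symm.trans_le (ContinuousMap.dist_apply_le_dist y)

theorem continuous_integral_continuousMap : Continuous fun h : C(Y, ℝ) => ∫ y, h y ∂μ :=
  (LipschitzWith.of_dist_le' (dist_integral_continuousMap_le μ)).continuous

/-- The integral operator `g ↦ ∫ y, k x y * g y ∂μ` from `C(Y, ℝ)` to `C(X, ℝ)` whose kernel is a
jointly continuous function `k` of two variables, given in curried form. -/
noncomputable def integralOperator (k : C(X, C(Y, ℝ))) : C(Y, ℝ) →ₗ[ℝ] C(X, ℝ) where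
  toFun g := ⟨fun x => ∫ y, (k x * g) y ∂μ,
    (continuous_integral_continuousMap μ).comp (by fun_prop)⟩
  map_add' g g' := by
    ext x
    simp only [mul_add, ContinuousMap.add_apply, ContinuousMap.coe_mk]
    exact integral_add (integrable_continuousMap μ _) (integrable_continuousMap μ _)
  map_smul' a g := by
    ext x
    simpa [mul_left_comm] using integral_const_mul a _

variable {μ} {k : C(X, C(Y, ℝ))} {g : C(Y, ℝ)}

theorem le_integralOperator_apply {A : Set Y} (hA : MeasurableSet A) {M ρ : ℝ} {x : X}
    (hρ : 0 ≤ ρ) (hk : 0 ≤ᵐ[μ] k x) (hM : 1 ≤ M * ∫ y in A, k x y ∂μ) (hg : 0 ≤ g)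
    (hgA : ∀ y ∈ A, M * ρ ≤ g y) : ρ ≤ integralOperator μ k g x := by
  have hint : Integrable (fun y => k x y * g y) μ := integrable_continuousMap μ (k x * g)
  calc ρ ≤ (M * ∫ y in A, k x y ∂μ) * ρ := le_mul_of_one_le_left hρ hM
    _ = ∫ y in A, k x y * (M * ρ) ∂μ := by rw [integral_mul_const]; ring
    _ ≤ ∫ y in A, k x y * g y ∂μ := by
      refine setIntegral_mono_on_ae ((integrable_continuousMap μ (k x)).mul_const _).integrableOn
        hint.integrableOn hA (hk.mono fun y hy hyA => ?_)
      exact mul_le_mul_of_nonneg_left (hgA y hyA) hy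
    _ ≤ ∫ y, k x y * g y ∂μ :=
      setIntegral_le_integral hint (hk.mono fun y hy => mul_nonneg hy (hg y))

variable [CompactSpace X]

theorem isCompactOperator_integralOperator : IsCompactOperator (integralOperator μ k) := by
  let C := μ.real univ * max ‖k‖ 1
  refine ⟨_, isCompact_setOf_norm_le_dist_le k C,
    mem_of_superset (closedBall_mem_nhds 0 one_pos) fun g hg => ?_⟩
  have hnorm : ‖g‖ ≤ 1 := mem_closedBall_zero_iff.1 hg
  refine ⟨fun x => ?_, fun x x' => ?_⟩
  · calc ‖∫ y, (k x * g) y ∂μ‖ ≤ ‖k x * g‖ * μ.real univ :=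
          norm_integral_le_of_norm_le_const (.of_forall (k x * g).norm_coe_le_norm)
      _ ≤ C := by
        rw [mul_comm]
        refine mul_le_mul_of_nonneg_left ?_ measureReal_nonneg
        exact ((norm_mul_le _ _).trans (mul_le_of_le_one_right (norm_nonneg _) hnorm)).trans
          ((k.norm_coe_le_norm x).trans (le_max_left _ _))
  · calc dist (∫ y, (k x * g) y ∂μ) (∫ y, (k x' * g) y ∂μ)
        ≤ μ.real univ * dist (k x * g) (k x' * g) := dist_integral_continuousMap_le μ _ _
      _ ≤ μ.real univ * dist (k x) (k x') := by
        gcongr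
        rw [dist_eq_norm, dist_eq_norm, ← sub_mul]
        exact (norm_mul_le _ _).trans (mul_le_of_le_one_right (norm_nonneg _) hnorm)
      _ ≤ C * dist (k x) (k x') := by
        gcongr
        exact le_mul_of_one_le_right measureReal_nonneg (le_max_right _ _)

theorem norm_integralOperator_le {m r : ℝ} (hr : 0 ≤ r) (hk : ∀ x, m * ∫ y, |k x y| ∂μ ≤ 1)
    (hg : ∀ y, |g y| ≤ m * r) : ‖integralOperator μ k g‖ ≤ r := by
  refine (ContinuousMap.norm_le _ hr).2 fun x => ?_
  calc ‖∫ y, k x y * g y ∂μ‖ ≤ ∫ y, |k x y| * (m * r) ∂μ := by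
        refine norm_integral_le_of_norm_le ((integrable_continuousMap μ (k x)).abs.mul_const _)
          (.of_forall fun y => ?_)
        rw [norm_mul]
        exact mul_le_mul_of_nonneg_left (hg y) (norm_nonneg _)
    _ = (m * ∫ y, |k x y| ∂μ) * r := by rw [integral_mul_const]; ring
    _ ≤ r := mul_le_of_le_one_left hr (hk x)

theorem mul_norm_integralOperator_le {c : ℝ} {x : X} (hc : 0 < c)
    (hk : ∀ x', ∀ᵐ y ∂μ, c * |k x' y| ≤ k x y) (hg : 0 ≤ g) :
    c * ‖integralOperator μ k g‖ ≤ integralOperator μ k g x := by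
  have hnorm (x' : X) : c * ‖integralOperator μ k g x'‖ ≤ integralOperator μ k g x := calc
    c * ‖integralOperator μ k g x'‖ ≤ c * ∫ y, ‖(k x' * g) y‖ ∂μ := by
      gcongr
      exact norm_integral_le_integral_norm _
    _ = ∫ y, c * ‖(k x' * g) y‖ ∂μ := (integral_const_mul _ _).symm
    _ ≤ ∫ y, (k x * g) y ∂μ := by
      refine integral_mono_ae ((integrable_continuousMap μ _).norm.const_mul c)
        (integrable_continuousMap μ _) ((hk x').mono fun y hy => ?_)
      have hgy : 0 ≤ g y := hg y
      calc c * ‖k x' y * g y‖ = c * |k x' y| * g y := by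
            rw [norm_mul, Real.norm_of_nonneg hgy, Real.norm_eq_abs, mul_assoc]
        _ ≤ k x y * g y := mul_le_mul_of_nonneg_right hy hgy
  have hnonneg : 0 ≤ integralOperator μ k g x :=
    (mul_nonneg hc.le (norm_nonneg _)).trans (hnorm x)
  rw [← le_div_iff₀' hc, ContinuousMap.norm_le _ (div_nonneg hnonneg hc.le)]
  exact fun x' => (le_div_iff₀' hc).2 (hnorm x')

end IntegralOperator

section ConeFixedPoint

variable {ι T : Type*} [Nonempty ι] [TopologicalSpace T]

section Raise

variable [Fintype ι]

/-- The least amount `τ ≥ 0` for which adding the constants `τ * ρ i` to the components `u i` of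
`u` pushes at least one of them above the level `ρ i` on the whole of `A i`. -/
noncomputable def levelDeficit (A : ι → Set T) (ρ : ι → ℝ) (u : ι → C(T, ℝ)) : ℝ :=
  Finset.univ.inf' Finset.univ_nonempty fun i => max 0 (1 - sInf (u i '' A i) / ρ i)

/-- The shift of `u` by its level deficit, so that some component is at least `ρ i` on `A i`. -/
noncomputable def raise (A : ι → Set T) (ρ : ι → ℝ) (u : ι → C(T, ℝ)) : ι → C(T, ℝ) :=
  fun i => u i + .const T (levelDeficit A ρ u * ρ i)

variable {A : ι → Set T} {ρ : ι → ℝ}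

theorem levelDeficit_nonneg (u : ι → C(T, ℝ)) : 0 ≤ levelDeficit A ρ u :=
  Finset.le_inf' _ _ fun _ _ => le_max_left _ _

theorem raise_apply (u : ι → C(T, ℝ)) (i : ι) (t : T) :
    raise A ρ u i t = u i t + levelDeficit A ρ u * ρ i := rfl

theorem raise_eq_self {u : ι → C(T, ℝ)} (hu : levelDeficit A ρ u = 0) : raise A ρ u = u := by
  ext i t
  rw [raise_apply, hu, zero_mul, add_zero]

theorem exists_forall_le_raise (hA : ∀ i, IsCompact (A i)) (hρ : ∀ i, 0 < ρ i)
    (u : ι → C(T, ℝ)) : ∃ i, ∀ t ∈ A i, ρ i ≤ raise A ρ u i t := by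
  obtain ⟨i, -, hi⟩ := Finset.exists_mem_eq_inf' Finset.univ_nonempty
    fun i => max 0 (1 - sInf (u i '' A i) / ρ i)
  refine ⟨i, fun t ht => ?_⟩
  have hinf : sInf (u i '' A i) ≤ u i t :=
    csInf_le ((hA i).image (u i).continuous).bddBelow (mem_image_of_mem _ ht)
  have hdeficit : 1 - sInf (u i '' A i) / ρ i ≤ levelDeficit A ρ u :=
    (le_max_right _ _).trans_eq hi.symm
  rw [sub_le_comm, le_div_iff₀ (hρ i)] at hdeficit
  rw [raise_apply]
  linarith

theorem exists_raise_le (hA : ∀ i, IsCompact (A i)) (hne : ∀ i, (A i).Nonempty)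
    (hρ : ∀ i, 0 < ρ i) {u : ι → C(T, ℝ)} (hu : 0 < levelDeficit A ρ u) (i : ι) :
    ∃ t ∈ A i, raise A ρ u i t ≤ ρ i := by
  obtain ⟨t, ht, hinf⟩ := (hA i).exists_sInf_image_eq (hne i) (u i).continuous.continuousOn
  have hdeficit : levelDeficit A ρ u ≤ max 0 (1 - sInf (u i '' A i) / ρ i) :=
    Finset.inf'_le _ (Finset.mem_univ i)
  have : levelDeficit A ρ u ≤ 1 - u i t / ρ i := by
    rw [← hinf]
    exact (le_max_iff.1 hdeficit).resolve_left hu.not_ge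
  rw [le_sub_comm, div_le_iff₀ (hρ i)] at this
  refine ⟨t, ht, ?_⟩
  rw [raise_apply]
  linarith

variable [CompactSpace T]

theorem continuous_raise (hA : ∀ i, IsCompact (A i)) : Continuous (raise A ρ) := by
  have hinf (i : ι) : Continuous fun u : ι → C(T, ℝ) => sInf (u i '' A i) :=
    (hA i).continuous_sInf (f := fun (u : ι → C(T, ℝ)) t => u i t) <| by
      simp only [Function.HasUncurry.uncurry, id_eq]
      fun_prop
  have hdeficit : Continuous (levelDeficit A ρ) := by
    unfold levelDeficit
    exact Continuous.finset_inf'_apply _ fun i _ =>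
      continuous_const.max (continuous_const.sub ((hinf i).div_const _))
  refine continuous_pi fun i => (continuous_apply i).add ?_
  exact ContinuousMap.continuous_const'.comp (hdeficit.mul_const _)

theorem norm_raise_le {c : ℝ} {u : ι → C(T, ℝ)} {i : ι} (hρ : 0 ≤ ρ i) (hc : 0 < c) (hc1 : c ≤ 1)
    {t : T} (hu : c * ‖u i‖ ≤ u i t) (ht : raise A ρ u i t ≤ ρ i) :
    ‖raise A ρ u i‖ ≤ ρ i / c := by
  have hshift : 0 ≤ levelDeficit A ρ u * ρ i := mul_nonneg (levelDeficit_nonneg u) hρ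
  have hnorm : ‖raise A ρ u i‖ ≤ ‖u i‖ + levelDeficit A ρ u * ρ i :=
    (norm_add_le _ _).trans <| by
      gcongr
      exact (ContinuousMap.norm_le _ hshift).2 fun _ => (Real.norm_of_nonneg hshift).le
  rw [le_div_iff₀' hc]
  calc c * ‖raise A ρ u i‖ ≤ c * ‖u i‖ + c * (levelDeficit A ρ u * ρ i) := by
        rw [← mul_add]
        gcongr
    _ ≤ u i t + levelDeficit A ρ u * ρ i := add_le_add hu (mul_le_of_le_one_left hshift hc1)
    _ ≤ ρ i := ht

end Raise

theorem exists_fixedPoint_of_level_preserving [Finite ι] [CompactSpace T] {A : ι → Set T}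
    {ρ : ι → ℝ} {Ψ : (ι → C(T, ℝ)) → ι → C(T, ℝ)}
    {Q : Set (ι → C(T, ℝ))} {c : ι → ℝ} (hA : ∀ i, IsCompact (A i)) (hne : ∀ i, (A i).Nonempty)
    (hρ : ∀ i, 0 < ρ i) (hc : ∀ i, c i ∈ Ioc 0 1) (hΨ : Continuous Ψ) (hQ : IsCompact Q)
    (hmem : ∀ u, Ψ u ∈ Q) (hcone : ∀ u i, ∀ t ∈ A i, c i * ‖Ψ u i‖ ≤ Ψ u i t)
    (hlevel : ∀ u : ι → C(T, ℝ), (∀ j, ‖u j‖ ≤ ρ j / c j) → ∀ i, (∀ t ∈ A i, ρ i ≤ u i t) →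
      ∀ t ∈ A i, ρ i ≤ Ψ u i t) :
    ∃ u, Ψ u = u ∧ ∃ i, ∀ t ∈ A i, ρ i ≤ u i t := by
  have := Fintype.ofFinite ι
  obtain ⟨u, hu⟩ : ∃ u, Ψ (raise A ρ u) = u :=
    exists_fixedPoint_of_continuous_of_isCompact (hΨ.comp (continuous_raise hA)) hQ fun u => hmem _
  obtain ⟨i, hi⟩ := exists_forall_le_raise hA hρ u
  rcases (levelDeficit_nonneg u).eq_or_lt' with hzero | hpos
  · have hraise := raise_eq_self hzero
    rw [hraise] at hu
    exact ⟨u, hu, i, hraise ▸ hi⟩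
  · choose t ht hle using exists_raise_le hA hne hρ hpos
    have hcone_u (j : ι) : c j * ‖u j‖ ≤ u j (t j) := by
      simpa only [hu] using hcone (raise A ρ u) j (t j) (ht j)
    have hlow := hlevel (raise A ρ u)
      (fun j => norm_raise_le (hρ j).le (hc j).1 (hc j).2 (hcone_u j) (hle j)) i hi (t i) (ht i)
    rw [hu] at hlow
    exact absurd (hlow.trans_lt (lt_add_of_pos_right _ (mul_pos hpos (hρ i)))) (hle i).not_gt

end ConeFixedPoint

section HammersteinSystem

variable {ι T : Type*} [TopologicalSpace T]

/-- The superposition (Nemytskii) operator `u ↦ (t ↦ f (t, u t))` for `ι`-tuples of functions. -/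
def superposition (f : C(T × (ι → ℝ), ℝ)) (u : ι → C(T, ℝ)) : C(T, ℝ) :=
  f.comp ((ContinuousMap.id T).prodMk (ContinuousMap.pi u))

theorem superposition_apply (f : C(T × (ι → ℝ), ℝ)) (u : ι → C(T, ℝ)) (t : T) :
    superposition f u t = f (t, fun j => u j t) := rfl

/-- The function `f` with its second argument clamped to the box `[-r, r]`. -/
def truncate (r : ι → ℝ) (f : C(T × (ι → ℝ), ℝ)) : C(T × (ι → ℝ), ℝ) :=
  f.comp ⟨fun p => (p.1, fun j => max (-r j) (min (p.2 j) (r j))), by fun_prop⟩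

theorem truncate_of_abs_le {r : ι → ℝ} (f : C(T × (ι → ℝ), ℝ)) {x : ι → ℝ}
    (hx : ∀ j, |x j| ≤ r j) (t : T) : truncate r f (t, x) = f (t, x) := by
  have hclamp : (fun j => max (-r j) (min (x j) (r j))) = x := funext fun j => by
    rw [min_eq_left (abs_le.1 (hx j)).2, max_eq_right (abs_le.1 (hx j)).1]
  exact congrArg (fun y => f (t, y)) hclamp

theorem truncate_mem {r : ι → ℝ} (hr : ∀ j, 0 ≤ r j) {f : C(T × (ι → ℝ), ℝ)} {t : T} {s : Set ℝ}
    (hf : ∀ x, (∀ j, |x j| ≤ r j) → f (t, x) ∈ s) (x : ι → ℝ) : truncate r f (t, x) ∈ s :=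
  hf _ fun j => abs_le.2
    ⟨le_max_left _ _, max_le (neg_le_self (hr j)) (min_le_right _ _)⟩

variable [CompactSpace T]

theorem continuous_superposition (f : C(T × (ι → ℝ), ℝ)) : Continuous (superposition f) := by
  refine ContinuousMap.continuous_of_continuous_uncurry _ ?_
  simp only [Function.uncurry_def, superposition_apply]
  fun_prop

variable [MeasurableSpace T]

/-- The positivity and size conditions on the kernel `k` of one component of the system: on `A` its
sections dominate `c` times all sections, and `m`, `M` bound its mass from above on `T` and from
below on `A`. The majorant `Φ` with `|k t s| ≤ Φ s` and `c * Φ s ≤ k t s` is eliminated in favour of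
the resulting Harnack-type inequality. -/
structure IsConeKernel (μ : Measure T) (k : C(T, C(T, ℝ))) (A : Set T) (c m M : ℝ) : Prop where
  isClosed : IsClosed A
  nonempty : A.Nonempty
  mem_Ioc : c ∈ Ioc 0 1
  mul_abs_le : ∀ t ∈ A, ∀ t', ∀ᵐ s ∂μ, c * |k t' s| ≤ k t s
  mul_integral_abs_le : ∀ t, m * ∫ s, |k t s| ∂μ ≤ 1
  le_mul_setIntegral : ∀ t ∈ A, 1 ≤ M * ∫ s in A, k t s ∂μ

variable [OpensMeasurableSpace T] {μ : Measure T} [IsFiniteMeasure μ]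

namespace IsConeKernel

variable {k : C(T, C(T, ℝ))} {A : Set T} {c m M : ℝ}

theorem mul_norm_le (hk : IsConeKernel μ k A c m M) {t : T} (ht : t ∈ A)
    {g : C(T, ℝ)} (hg : 0 ≤ g) : c * ‖integralOperator μ k g‖ ≤ integralOperator μ k g t :=
  mul_norm_integralOperator_le hk.mem_Ioc.1 (hk.mul_abs_le t ht) hg

theorem le_apply (hk : IsConeKernel μ k A c m M) {t : T} (ht : t ∈ A) {ρ : ℝ}
    (hρ : 0 ≤ ρ) {g : C(T, ℝ)} (hg : 0 ≤ g) (hgA : ∀ s ∈ A, M * ρ ≤ g s) :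
    ρ ≤ integralOperator μ k g t := by
  have hpos : 0 ≤ᵐ[μ] k t := (hk.mul_abs_le t ht t).mono fun s hs =>
    (mul_nonneg hk.mem_Ioc.1.le (abs_nonneg _)).trans hs
  exact le_integralOperator_apply hk.isClosed.measurableSet hρ hpos
    (hk.le_mul_setIntegral t ht) hg hgA

end IsConeKernel

variable {k : ι → C(T, C(T, ℝ))} {A : ι → Set T} {c m M ρ r : ι → ℝ} {f : ι → C(T × (ι → ℝ), ℝ)}

/-- The operator whose fixed points are the solutions of the system of Hammerstein equations
`u i t = ∫ s, k i t s * f i (s, u s) ∂μ`. -/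
noncomputable def hammersteinOperator (μ : Measure T) [IsFiniteMeasure μ] (k : ι → C(T, C(T, ℝ)))
    (f : ι → C(T × (ι → ℝ), ℝ)) (u : ι → C(T, ℝ)) : ι → C(T, ℝ) :=
  fun i => integralOperator μ (k i) (superposition (f i) u)

theorem hammersteinOperator_apply (u : ι → C(T, ℝ)) (i : ι) (t : T) :
    hammersteinOperator μ k f u i t = ∫ s, k i t s * f i (s, fun j => u j s) ∂μ := rfl

theorem continuous_hammersteinOperator : Continuous (hammersteinOperator μ k f) :=
  continuous_pi fun _ =>
    isCompactOperator_integralOperator.continuous.comp (continuous_superposition _)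

theorem exists_isCompact_forall_hammersteinOperator_mem {R : ι → ℝ} (hf : ∀ i p, |f i p| ≤ R i) :
    ∃ Q, IsCompact Q ∧ ∀ u, hammersteinOperator μ k f u ∈ Q := by
  choose Q hQ hsub using fun i =>
    isCompactOperator_integralOperator (μ := μ) (k := k i) |>.image_closedBall_subset_compact |R i|
  refine ⟨univ.pi Q, isCompact_univ_pi hQ, fun u i _ => hsub i (mem_image_of_mem _ ?_)⟩
  rw [mem_closedBall_zero_iff]
  exact (ContinuousMap.norm_le _ (abs_nonneg _)).2 fun t => (hf i _).trans (le_abs_self _)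

variable [Finite ι] [Nonempty ι]

theorem exists_fixedPoint_hammersteinOperator
    (hk : ∀ i, IsConeKernel μ (k i) (A i) (c i) (m i) (M i)) (hρ : ∀ i, 0 < ρ i)
    (hf : ∀ i p, f i p ∈ Icc 0 (r i))
    (hlow : ∀ i, ∀ t ∈ A i, ∀ x, (∀ j, |x j| ≤ ρ j / c j) → ρ i ≤ x i → M i * ρ i ≤ f i (t, x)) :
    ∃ u, hammersteinOperator μ k f u = u ∧ ∃ i, ∀ t ∈ A i, ρ i ≤ u i t := by
  obtain ⟨Q, hQ, hmem⟩ := exists_isCompact_forall_hammersteinOperator_mem (μ := μ) (k := k)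
    (R := r) fun i p => (abs_of_nonneg (hf i p).1).trans_le (hf i p).2
  refine exists_fixedPoint_of_level_preserving (fun i => (hk i).isClosed.isCompact)
    (fun i => (hk i).nonempty) hρ (fun i => (hk i).mem_Ioc) continuous_hammersteinOperator hQ hmem
    (fun u i t ht => (hk i).mul_norm_le ht fun s => (hf i _).1) ?_
  intro u hu i hi t ht
  refine (hk i).le_apply ht (hρ i).le (fun s => (hf i _).1) fun s hs => ?_
  exact hlow i s hs _ (fun j => ((u j).norm_coe_le_norm s).trans (hu j)) (hi s hs)

theorem existence_S1_general
    (hk : ∀ i, IsConeKernel μ (k i) (A i) (c i) (m i) (M i))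
    (hρ : ∀ i, 0 < ρ i) (hr : ∀ i, ρ i / c i ≤ r i)
    (hI0 : ∀ i, ∀ t ∈ A i, ∀ x, (∀ j, |x j| ≤ ρ j / c j) → ρ i ≤ x i → M i * ρ i ≤ f i (t, x))
    (hI1 : ∀ i t x, (∀ j, |x j| ≤ r j) → f i (t, x) ∈ Icc 0 (m i * r i)) :
    ∃ u : ι → C(T, ℝ), (∀ i, ∀ t ∈ A i, c i * ‖u i‖ ≤ u i t) ∧
      (∀ i t, u i t = ∫ s, k i t s * f i (s, fun j => u j s) ∂μ) ∧
      (∀ i, ‖u i‖ ≤ r i) ∧ ∃ i, ρ i ≤ ‖u i‖ := by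
  have hr0 (i : ι) : 0 ≤ r i := (div_nonneg (hρ i).le (hk i).mem_Ioc.1.le).trans (hr i)
  have hf (i : ι) (p : T × (ι → ℝ)) : truncate r (f i) p ∈ Icc 0 (m i * r i) :=
    truncate_mem hr0 (hI1 i p.1) p.2
  obtain ⟨u, hfix, i₀, hlow⟩ := exists_fixedPoint_hammersteinOperator
    (f := fun i => truncate r (f i)) hk hρ hf fun i t ht x hx hxi => by
      rw [truncate_of_abs_le _ fun j => (hx j).trans (hr j)]
      exact hI0 i t ht x hx hxi
  have hnorm (i : ι) : ‖u i‖ ≤ r i := by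
    rw [← hfix]
    exact norm_integralOperator_le (hr0 i) (hk i).mul_integral_abs_le fun s =>
      (abs_of_nonneg (hf i _).1).trans_le (hf i _).2
  have hmem (s : T) (j : ι) : |u j s| ≤ r j := ((u j).norm_coe_le_norm s).trans (hnorm j)
  refine ⟨u, fun i t ht => ?_, fun i t => ?_, hnorm, i₀, ?_⟩
  · rw [← hfix]
    exact (hk i).mul_norm_le ht fun s => (hf i _).1
  · rw [← hfix, hammersteinOperator_apply, hfix]
    simp only [truncate_of_abs_le _ (hmem _)]
  · obtain ⟨t, ht⟩ := (hk i₀).nonempty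
    exact (hlow t ht).trans ((le_abs_self _).trans ((u i₀).norm_coe_le_norm t))

end HammersteinSystem

section UnitInterval

theorem bddAbove_of_iSup_ne_zero {α : Sort*} {w : α → ℝ} (hw : ⨆ x, w x ≠ 0) :
    BddAbove (range w) :=
  not_imp_comm.1 Real.iSup_of_not_bddAbove hw

theorem bddBelow_of_iInf_ne_zero {α : Sort*} {w : α → ℝ} (hw : ⨅ x, w x ≠ 0) :
    BddBelow (range w) :=
  not_imp_comm.1 Real.iInf_of_not_bddBelow hw

theorem setIntegral_unitInterval_preimage_Icc {a b : ℝ} (ha : 0 ≤ a) (hab : a ≤ b) (hb : b ≤ 1)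
    (h : ℝ → ℝ) : ∫ s in ((↑) ⁻¹' Icc a b : Set I), h s = ∫ s in a..b, h s := by
  rw [intervalIntegral.integral_of_le hab, ← integral_Icc_eq_integral_Ioc,
    ← Measure.restrict_restrict_of_subset (Icc_subset_Icc ha hb),
    ← unitInterval.measurePreserving_coe.map_eq]
  exact ((MeasurableEmbedding.subtype_coe measurableSet_Icc).setIntegral_map _ _).symm

theorem integral_unitInterval (h : ℝ → ℝ) : ∫ s : I, h s = ∫ s in (0 : ℝ)..1, h s := by
  rw [← setIntegral_unitInterval_preimage_Icc le_rfl zero_le_one le_rfl, Subtype.coe_preimage_self,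
    Measure.restrict_univ]

/-- A real function of two variables continuous on the unit square, as a kernel over `I`. -/
def kernelOfContinuousOn {k : ℝ → ℝ → ℝ}
    (hk : ContinuousOn (fun p : ℝ × ℝ => k p.1 p.2) (Icc 0 1 ×ˢ Icc 0 1)) : C(I, C(I, ℝ)) :=
  ContinuousMap.curry ⟨fun p => k p.1 p.2, hk.comp_continuous
    (f := fun p : I × I => ((p.1 : ℝ), (p.2 : ℝ))) (by fun_prop) fun p => ⟨p.1.2, p.2.2⟩⟩

theorem isConeKernel_kernelOfContinuousOn {k : ℝ → ℝ → ℝ} {Φ : ℝ → ℝ} {a b c m M : ℝ}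
    (hk : ContinuousOn (fun p : ℝ × ℝ => k p.1 p.2) (Icc 0 1 ×ˢ Icc 0 1))
    (ha : 0 ≤ a) (hab : a ≤ b) (hb : b ≤ 1) (hc : c ∈ Ioc 0 1)
    (hub : ∀ t ∈ Icc (0 : ℝ) 1, ∀ᵐ s ∂volume.restrict (Icc (0 : ℝ) 1), |k t s| ≤ Φ s)
    (hlb : ∀ t ∈ Icc a b, ∀ᵐ s ∂volume.restrict (Icc (0 : ℝ) 1), c * Φ s ≤ k t s)
    (hm : 0 < m) (hsup : 1 / m = ⨆ t : Icc (0 : ℝ) 1, ∫ s in (0 : ℝ)..1, |k t s|)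
    (hM : 0 < M) (hinf : 1 / M = ⨅ t : Icc a b, ∫ s in a..b, k t s) :
    IsConeKernel volume (kernelOfContinuousOn hk) ((↑) ⁻¹' Icc a b) c m M where
  isClosed := isClosed_Icc.preimage continuous_subtype_val
  nonempty := ⟨⟨a, ha, hab.trans hb⟩, le_rfl, hab⟩
  mem_Ioc := hc
  mul_abs_le t ht t' := by
    filter_upwards [(ae_restrict_iff_subtype measurableSet_Icc).1 (hub t' t'.2),
      (ae_restrict_iff_subtype measurableSet_Icc).1 (hlb t ht)] with s hub hlb
    exact (mul_le_mul_of_nonneg_left hub hc.1.le).trans hlb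
  mul_integral_abs_le t := by
    rw [← le_div_iff₀' hm, hsup]
    exact (integral_unitInterval fun s => |k t s|).trans_le
      (le_ciSup (bddAbove_of_iSup_ne_zero (hsup.symm.trans_ne (one_div_pos.2 hm).ne')) t)
  le_mul_setIntegral t ht := by
    rw [← div_le_iff₀' hM, hinf]
    exact (ciInf_le (bddBelow_of_iInf_ne_zero (hinf.symm.trans_ne (one_div_pos.2 hM).ne'))
      ⟨(t : ℝ), ht⟩).trans_eq (setIntegral_unitInterval_preimage_Icc ha hab hb (k t)).symm

/-- A real function of a point of the unit interval and two real variables, as a function of a pair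
of variables indexed by `Fin 2`. -/
def nonlinearityOfContinuousOn {f : ℝ → ℝ → ℝ → ℝ}
    (hf : ContinuousOn (fun p : ℝ × ℝ × ℝ => f p.1 p.2.1 p.2.2) (Icc 0 1 ×ˢ univ)) :
    C(I × (Fin 2 → ℝ), ℝ) :=
  ⟨fun p => f p.1 (p.2 0) (p.2 1), hf.comp_continuous
    (f := fun p : I × (Fin 2 → ℝ) => ((p.1 : ℝ), p.2 0, p.2 1)) (by fun_prop)
    fun p => ⟨p.1.2, mem_univ _⟩⟩

theorem condI0.forall_le {f₁ f₂ : ℝ → ℝ → ℝ → ℝ} {a₁ b₁ c₁ a₂ b₂ c₂ M₁ M₂ ρ₁ ρ₂ : ℝ}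
    (h : condI0 f₁ f₂ a₁ b₁ c₁ a₂ b₂ c₂ M₁ M₂ ρ₁ ρ₂)
    (hf₁ : ContinuousOn (fun p : ℝ × ℝ × ℝ => f₁ p.1 p.2.1 p.2.2) (Icc 0 1 ×ˢ univ))
    (hf₂ : ContinuousOn (fun p : ℝ × ℝ × ℝ => f₂ p.1 p.2.1 p.2.2) (Icc 0 1 ×ˢ univ)) (i : Fin 2) :
    ∀ t ∈ ![((↑) ⁻¹' Icc a₁ b₁ : Set I), (↑) ⁻¹' Icc a₂ b₂] i, ∀ x,
      (∀ j, |x j| ≤ ![ρ₁, ρ₂] j / ![c₁, c₂] j) → ![ρ₁, ρ₂] i ≤ x i →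
        ![M₁, M₂] i * ![ρ₁, ρ₂] i ≤
          ![nonlinearityOfContinuousOn hf₁, nonlinearityOfContinuousOn hf₂] i (t, x) := by
  revert i
  refine Fin.forall_fin_two.2 ⟨fun t ht x hx hx₀ => ?_, fun t ht x hx hx₁ => ?_⟩
  · exact (h.1 t ht _ ⟨hx₀, (abs_le.1 (hx 0)).2⟩ _ (abs_le.1 (hx 1))).le
  · exact (h.2 t ht _ (abs_le.1 (hx 0)) _ ⟨hx₁, (abs_le.1 (hx 1)).2⟩).le

theorem condI1.forall_mem_Icc {f₁ f₂ : ℝ → ℝ → ℝ → ℝ} {m₁ m₂ r₁ r₂ : ℝ}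
    (h : condI1 f₁ f₂ m₁ m₂ r₁ r₂)
    (hf₁ : ContinuousOn (fun p : ℝ × ℝ × ℝ => f₁ p.1 p.2.1 p.2.2) (Icc 0 1 ×ˢ univ))
    (hf₂ : ContinuousOn (fun p : ℝ × ℝ × ℝ => f₂ p.1 p.2.1 p.2.2) (Icc 0 1 ×ˢ univ))
    (hf₁nn : ∀ t ∈ Icc (0 : ℝ) 1, ∀ x y : ℝ, 0 ≤ f₁ t x y)
    (hf₂nn : ∀ t ∈ Icc (0 : ℝ) 1, ∀ x y : ℝ, 0 ≤ f₂ t x y) (i : Fin 2) (t : I) (x : Fin 2 → ℝ)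
    (hx : ∀ j, |x j| ≤ ![r₁, r₂] j) :
    ![nonlinearityOfContinuousOn hf₁, nonlinearityOfContinuousOn hf₂] i (t, x) ∈
      Icc 0 (![m₁, m₂] i * ![r₁, r₂] i) := by
  have hlt := h t t.2 _ (abs_le.1 (hx 0)) _ (abs_le.1 (hx 1))
  revert i
  exact Fin.forall_fin_two.2 ⟨⟨hf₁nn t t.2 _ _, hlt.1.le⟩, ⟨hf₂nn t t.2 _ _, hlt.2.le⟩⟩

theorem supNorm_IccExtend (u : C(I, ℝ)) : supNorm (IccExtend zero_le_one u) = ‖u‖ := by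
  rw [u.norm_eq_iSup_norm]
  exact iSup_congr fun t => by rw [IccExtend_val]; rfl

theorem le_infOn_IccExtend {a b x : ℝ} (ha : 0 ≤ a) (hab : a ≤ b) (hb : b ≤ 1) {u : C(I, ℝ)}
    (hx : ∀ t ∈ ((↑) ⁻¹' Icc a b : Set I), x ≤ u t) : x ≤ infOn a b (IccExtend zero_le_one u) := by
  have : Nonempty (Icc a b) := (nonempty_Icc.2 hab).to_subtype
  refine le_ciInf fun t => ?_
  have ht := Icc_subset_Icc ha hb t.2
  rw [IccExtend_of_mem _ _ ht]
  exact hx ⟨t, ht⟩ t.2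

theorem IccExtend_eq_integral {u v w : C(I, ℝ)} {k : ℝ → ℝ → ℝ} {f : ℝ → ℝ → ℝ → ℝ}
    (hw : ∀ t : I, w t = ∫ s : I, k t s * f s (u s) (v s)) {t : ℝ} (ht : t ∈ Icc 0 1) :
    IccExtend zero_le_one w t = ∫ s in (0 : ℝ)..1,
      k t s * f s (IccExtend zero_le_one u s) (IccExtend zero_le_one v s) := by
  rw [IccExtend_of_mem _ _ ht, hw, ← integral_unitInterval]
  simp only [IccExtend_val]

theorem nontrivialSolution_IccExtend {k₁ k₂ : ℝ → ℝ → ℝ} {f₁ f₂ : ℝ → ℝ → ℝ → ℝ}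
    {a₁ b₁ c₁ a₂ b₂ c₂ : ℝ} {u v : C(I, ℝ)}
    (hab₁ : 0 ≤ a₁ ∧ a₁ ≤ b₁ ∧ b₁ ≤ 1) (hab₂ : 0 ≤ a₂ ∧ a₂ ≤ b₂ ∧ b₂ ≤ 1)
    (hu : ∀ t ∈ ((↑) ⁻¹' Icc a₁ b₁ : Set I), c₁ * ‖u‖ ≤ u t)
    (hv : ∀ t ∈ ((↑) ⁻¹' Icc a₂ b₂ : Set I), c₂ * ‖v‖ ≤ v t)
    (hu' : ∀ t : I, u t = ∫ s : I, k₁ t s * f₁ s (u s) (v s))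
    (hv' : ∀ t : I, v t = ∫ s : I, k₂ t s * f₂ s (u s) (v s)) (hpos : 0 < ‖u‖ ∨ 0 < ‖v‖) :
    nontrivialSolution k₁ k₂ f₁ f₂ a₁ b₁ c₁ a₂ b₂ c₂
      (IccExtend zero_le_one u) (IccExtend zero_le_one v) := by
  refine ⟨⟨u.continuous.Icc_extend'.continuousOn, v.continuous.Icc_extend'.continuousOn, ?_, ?_⟩,
    ⟨fun _ => IccExtend_eq_integral hu', fun _ => IccExtend_eq_integral hv'⟩, ?_⟩
  · rw [supNorm_IccExtend]
    exact le_infOn_IccExtend hab₁.1 hab₁.2.1 hab₁.2.2 hu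
  · rw [supNorm_IccExtend]
    exact le_infOn_IccExtend hab₂.1 hab₂.2.1 hab₂.2.2 hv
  · rw [supNorm_IccExtend, supNorm_IccExtend]
    exact lt_max_iff.2 hpos

end UnitInterval

theorem existence_S1
    (k₁ k₂ : ℝ → ℝ → ℝ) (f₁ f₂ : ℝ → ℝ → ℝ → ℝ) (Φ₁ Φ₂ : ℝ → ℝ)
    (a₁ b₁ c₁ a₂ b₂ c₂ : ℝ)
    (hk₁ : ContinuousOn (fun p : ℝ × ℝ => k₁ p.1 p.2) (Set.Icc 0 1 ×ˢ Set.Icc 0 1))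
    (hk₂ : ContinuousOn (fun p : ℝ × ℝ => k₂ p.1 p.2) (Set.Icc 0 1 ×ˢ Set.Icc 0 1))
    (ha₁ : 0 ≤ a₁) (hab₁ : a₁ ≤ b₁) (hb₁ : b₁ ≤ 1)
    (ha₂ : 0 ≤ a₂) (hab₂ : a₂ ≤ b₂) (hb₂ : b₂ ≤ 1)
    (hc₁ : c₁ ∈ Set.Ioc (0:ℝ) 1) (hc₂ : c₂ ∈ Set.Ioc (0:ℝ) 1)
    (hΦ₁meas : Measurable Φ₁) (hΦ₂meas : Measurable Φ₂)
    (hΦ₁nn : ∀ s ∈ Set.Icc (0:ℝ) 1, 0 ≤ Φ₁ s) (hΦ₂nn : ∀ s ∈ Set.Icc (0:ℝ) 1, 0 ≤ Φ₂ s)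
    (hΦ₁bdd : ∃ C : ℝ, ∀ᵐ s ∂(volume.restrict (Set.Icc (0:ℝ) 1)), |Φ₁ s| ≤ C)
    (hΦ₂bdd : ∃ C : ℝ, ∀ᵐ s ∂(volume.restrict (Set.Icc (0:ℝ) 1)), |Φ₂ s| ≤ C)
    (hΦ₁pos : 0 < ∫ s in a₁..b₁, Φ₁ s) (hΦ₂pos : 0 < ∫ s in a₂..b₂, Φ₂ s)
    (hub₁ : ∀ t ∈ Set.Icc (0:ℝ) 1, ∀ᵐ s ∂(volume.restrict (Set.Icc (0:ℝ) 1)), |k₁ t s| ≤ Φ₁ s)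
    (hub₂ : ∀ t ∈ Set.Icc (0:ℝ) 1, ∀ᵐ s ∂(volume.restrict (Set.Icc (0:ℝ) 1)), |k₂ t s| ≤ Φ₂ s)
    (hlb₁ : ∀ t ∈ Set.Icc a₁ b₁, ∀ᵐ s ∂(volume.restrict (Set.Icc (0:ℝ) 1)), c₁ * Φ₁ s ≤ k₁ t s)
    (hlb₂ : ∀ t ∈ Set.Icc a₂ b₂, ∀ᵐ s ∂(volume.restrict (Set.Icc (0:ℝ) 1)), c₂ * Φ₂ s ≤ k₂ t s)
    (hf₁ : ContinuousOn (fun p : ℝ × ℝ × ℝ => f₁ p.1 p.2.1 p.2.2)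
      (Set.Icc 0 1 ×ˢ (Set.univ : Set (ℝ × ℝ))))
    (hf₂ : ContinuousOn (fun p : ℝ × ℝ × ℝ => f₂ p.1 p.2.1 p.2.2)
      (Set.Icc 0 1 ×ˢ (Set.univ : Set (ℝ × ℝ))))
    (hf₁nn : ∀ t ∈ Set.Icc (0:ℝ) 1, ∀ x y : ℝ, 0 ≤ f₁ t x y)
    (hf₂nn : ∀ t ∈ Set.Icc (0:ℝ) 1, ∀ x y : ℝ, 0 ≤ f₂ t x y)
    (m₁ m₂ M₁ M₂ : ℝ)
    (hm₁pos : 0 < m₁) (hm₂pos : 0 < m₂)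
    (hm₁ : 1 / m₁ = ⨆ t : Set.Icc (0:ℝ) 1, ∫ s in (0:ℝ)..1, |k₁ t.1 s|)
    (hm₂ : 1 / m₂ = ⨆ t : Set.Icc (0:ℝ) 1, ∫ s in (0:ℝ)..1, |k₂ t.1 s|)
    (hM₁pos : 0 < M₁) (hM₂pos : 0 < M₂)
    (hinf₁pos : 0 < ⨅ t : Set.Icc a₁ b₁, ∫ s in a₁..b₁, k₁ t.1 s)
    (hinf₂pos : 0 < ⨅ t : Set.Icc a₂ b₂, ∫ s in a₂..b₂, k₂ t.1 s)
    (hM₁ : 1 / M₁ = ⨅ t : Set.Icc a₁ b₁, ∫ s in a₁..b₁, k₁ t.1 s)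
    (hM₂ : 1 / M₂ = ⨅ t : Set.Icc a₂ b₂, ∫ s in a₂..b₂, k₂ t.1 s)
    (ρ₁ ρ₂ r₁ r₂ : ℝ) (hρ₁ : 0 < ρ₁) (hρ₂ : 0 < ρ₂) (hr₁pos : 0 < r₁) (hr₂pos : 0 < r₂)
    (hr₁ : ρ₁ / c₁ < r₁) (hr₂ : ρ₂ / c₂ < r₂)
    (hI0 : condI0 f₁ f₂ a₁ b₁ c₁ a₂ b₂ c₂ M₁ M₂ ρ₁ ρ₂)
    (hI1 : condI1 f₁ f₂ m₁ m₂ r₁ r₂)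
    :
    ∃ u v : ℝ → ℝ, nontrivialSolution k₁ k₂ f₁ f₂ a₁ b₁ c₁ a₂ b₂ c₂ u v := by
  have hkernel : ∀ i, IsConeKernel volume
      (![kernelOfContinuousOn hk₁, kernelOfContinuousOn hk₂] i)
      (![(↑) ⁻¹' Icc a₁ b₁, (↑) ⁻¹' Icc a₂ b₂] i) (![c₁, c₂] i) (![m₁, m₂] i) (![M₁, M₂] i) :=
    Fin.forall_fin_two.2
      ⟨isConeKernel_kernelOfContinuousOn hk₁ ha₁ hab₁ hb₁ hc₁ hub₁ hlb₁ hm₁pos hm₁ hM₁pos hM₁,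
        isConeKernel_kernelOfContinuousOn hk₂ ha₂ hab₂ hb₂ hc₂ hub₂ hlb₂ hm₂pos hm₂ hM₂pos hM₂⟩
  have hρ : ∀ i, 0 < ![ρ₁, ρ₂] i := Fin.forall_fin_two.2 ⟨hρ₁, hρ₂⟩
  have hr : ∀ i, ![ρ₁, ρ₂] i / ![c₁, c₂] i ≤ ![r₁, r₂] i := Fin.forall_fin_two.2 ⟨hr₁.le, hr₂.le⟩
  obtain ⟨u, hcone, hsol, -, i, hi⟩ := existence_S1_general hkernel hρ hr
    (hI0.forall_le hf₁ hf₂) (hI1.forall_mem_Icc hf₁ hf₂ hf₁nn hf₂nn)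
  have hpos : 0 < ‖u 0‖ ∨ 0 < ‖u 1‖ :=
    (Fin.exists_fin_two (p := fun j => 0 < ‖u j‖)).1 ⟨i, (hρ i).trans_le hi⟩
  exact ⟨_, _, nontrivialSolution_IccExtend ⟨ha₁, hab₁, hb₁⟩ ⟨ha₂, hab₂, hb₂⟩ (hcone 0) (hcone 1)
    (hsol 0) (hsol 1) hpos⟩
end
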